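/- arXiv:2401.09628 — 8 statements merged into one kernel-verified Lean document; each statement's English description precedes it below -/
import Mathlib

section
/- In a congestion game, the Rosenthal potential is an exact potential: for every joint pure strategy profile p = (p_1,…,p_n) ∈ S_1×⋯×S_n, every agent i, and every alternative pure strategy p_i' ∈ S_i, it holds that C_i(p_i', p_{-i}) − C_i(p_i, p_{-i}) = Φ(p_i', p_{-i}) − Φ(p_i, p_{-i}). -/
/-!
STATEMENT 0: In a congestion game, the Rosenthal potential is an exact potential:
for every joint pure strategy profile `p`, every agent `i`, and every alternative
pure strategy `p' ∈ S i`, it holds that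
`C_i(p', p_{-i}) − C_i(p_i, p_{-i}) = Φ(p', p_{-i}) − Φ(p)`.
-/

open Finset

noncomputable section

/-- The load of resource `e` under the joint pure profile `q`. -/
def load (n m : ℕ) (q : Fin n → Finset (Fin m)) (e : Fin m) : ℕ :=
  (Finset.univ.filter (fun j => e ∈ q j)).card

/-- The cost of agent `i` under the joint pure profile `q`. -/
def agentCost (n m : ℕ) (c : Fin m → ℕ → ℝ) (i : Fin n)
    (q : Fin n → Finset (Fin m)) : ℝ :=
  ∑ e ∈ q i, c e (load n m q e)

/-- The Rosenthal potential `Φ(q) = Σ_e Σ_{k=1}^{ℓ_e(q)} c_e(k)`. -/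
def rosenthal (n m : ℕ) (c : Fin m → ℕ → ℝ) (q : Fin n → Finset (Fin m)) : ℝ :=
  ∑ e : Fin m, ∑ k ∈ Finset.Icc 1 (load n m q e), c e k

/-!
Removing agent `i` from the game, modelled by giving `i` the empty strategy, lowers the potential
by exactly the cost of `i`: on each resource used by `i`, the top term of the inner sum disappears.
Two profiles that differ only in the strategy of `i` become equal after this removal, so their
potentials differ by the difference of the costs of `i`.
-/

theorem filter_mem_update_empty {ι α : Type*} [Fintype ι] [DecidableEq ι] [DecidableEq α]
    (q : ι → Finset α) (i : ι) (e : α) :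
    univ.filter (fun j => e ∈ Function.update q i ∅ j) =
      (univ.filter (fun j => e ∈ q j)).erase i := by
  ext j
  by_cases hj : j = i <;> simp [hj]

section

variable {n m : ℕ} {q : Fin n → Finset (Fin m)} {i : Fin n} {e : Fin m}

theorem load_update_empty_add_one_of_mem (he : e ∈ q i) :
    load n m (Function.update q i ∅) e + 1 = load n m q e := by
  rw [load, filter_mem_update_empty, card_erase_add_one (by simpa using he), load]

theorem load_update_empty_of_notMem (he : e ∉ q i) :
    load n m (Function.update q i ∅) e = load n m q e := by
  rw [load, filter_mem_update_empty, erase_eq_of_notMem (by simpa using he), load]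

end

theorem agentCost_add_rosenthal_update_empty {n m : ℕ} (c : Fin m → ℕ → ℝ) (i : Fin n)
    (q : Fin n → Finset (Fin m)) :
    agentCost n m c i q + rosenthal n m c (Function.update q i ∅) = rosenthal n m c q := by
  have agentCost_eq_sum_univ :
      agentCost n m c i q = ∑ e, if e ∈ q i then c e (load n m q e) else 0 := by
    simp [agentCost]
  rw [agentCost_eq_sum_univ, rosenthal, rosenthal, ← sum_add_distrib]
  refine sum_congr rfl fun e _ => ?_
  by_cases he : e ∈ q i
  · rw [if_pos he, ← load_update_empty_add_one_of_mem he,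
      sum_Icc_succ_top (Nat.le_add_left 1 _), add_comm]
  · rw [if_neg he, zero_add, load_update_empty_of_notMem he]

theorem rosenthal_exact_potential_general {n m : ℕ} (c : Fin m → ℕ → ℝ)
    (p : Fin n → Finset (Fin m)) (i : Fin n) (p' : Finset (Fin m)) :
    agentCost n m c i (Function.update p i p') - agentCost n m c i p
      = rosenthal n m c (Function.update p i p') - rosenthal n m c p := by
  rw [← agentCost_add_rosenthal_update_empty c i p,
    ← agentCost_add_rosenthal_update_empty c i (Function.update p i p'),
    Function.update_idem, add_sub_add_right_eq_sub]

theorem rosenthal_exact_potential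
    (n m : ℕ) (c : Fin m → ℕ → ℝ) (cmax : ℝ)
    (hmono : ∀ e, Monotone (c e))
    (hc : ∀ e k, 0 ≤ c e k ∧ c e k ≤ cmax)
    (S : Fin n → Set (Finset (Fin m))) (hS : ∀ i, (S i).Nonempty)
    (p : Fin n → Finset (Fin m)) (hp : ∀ j, p j ∈ S j)
    (i : Fin n) (p' : Finset (Fin m)) (hp' : p' ∈ S i) :
    agentCost n m c i (Function.update p i p') - agentCost n m c i p
      = rosenthal n m c (Function.update p i p') - rosenthal n m c p :=
  rosenthal_exact_potential_general c p i p'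

end
end

section
/- If c_e(0) = 0 for every resource e, then for every mixed profile π = (π_1,…,π_n) with marginalization x = (x_1,…,x_n) ∈ [0,1]^{n×m}, the expected Rosenthal potential under the product distribution equals the multilinear potential: E_{p ∼ π_1⊗⋯⊗π_n}[Φ(p)] = Φ(x), where Φ(x) = Σ_{e∈E} Σ_{S⊆[n]} (∏_{j∈S} x_{je}) (∏_{j∉S} (1−x_{je})) Σ_{ℓ=0}^{|S|} c_e(ℓ). -/
/-!
STATEMENT 1: If `c_e(0) = 0` for every resource `e`, then for every mixed profile
`π = (π_1,…,π_n)` with marginalization `x`, the expected Rosenthal potential under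
the product distribution equals the multilinear potential:
`E_{p ∼ π_1⊗⋯⊗π_n}[Φ(p)] = Φ(x)` where
`Φ(x) = Σ_e Σ_{S⊆[n]} (∏_{j∈S} x_{je})(∏_{j∉S}(1−x_{je})) Σ_{ℓ=0}^{|S|} c_e(ℓ)`.
-/

open Finset

noncomputable section

/-- Marginalization of a mixed profile: `x_{ie} = Pr_{p_i ∼ π_i}[e ∈ p_i]`. -/
def marginal (n m : ℕ) (π : Fin n → Finset (Fin m) → ℝ) (i : Fin n) (e : Fin m) : ℝ :=
  ∑ s : Finset (Fin m), if e ∈ s then π i s else 0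

/-- The multilinear potential
`Φ(x) = Σ_e Σ_{S⊆[n]} (∏_{j∈S} x_{je})(∏_{j∉S}(1−x_{je})) Σ_{ℓ=0}^{|S|} c_e(ℓ)`. -/
def multilinearPotential (n m : ℕ) (c : Fin m → ℕ → ℝ) (x : Fin n → Fin m → ℝ) : ℝ :=
  ∑ e : Fin m, ∑ S : Finset (Fin n),
    (∏ j ∈ S, x j e) * (∏ j ∈ Sᶜ, (1 - x j e)) *
      (∑ l ∈ Finset.range (S.card + 1), c e l)

/-!
Under independent sampling, the set `{j | e ∈ q j}` of users of a resource `e` equals `S` with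
probability `∏_{j∈S} x_{je} · ∏_{j∉S} (1 - x_{je})`, so the multilinear extension of a set function
at `x` is the expectation of that function at the random set of users. The potential of `e` depends
on this set only, through its cardinality, and linearity of expectation sums over the resources. The
sum over `ℓ` in `Φ(x)` starts at `0` rather than `1`, which contributes `∑ e, c e 0`.
-/

section IndependentSampling

variable {ι R : Type*} [Fintype ι] [DecidableEq ι]

/-- The multilinear extension of a set function `f` on subsets of `ι`, evaluated at `x`. It
expresses expectations over a random subset containing each `j` independently with probability
`x j`. -/
def multilinearExtension [CommRing R] (f : Finset ι → R) (x : ι → R) : R :=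
  ∑ S, (∏ j ∈ S, x j) * (∏ j ∈ Sᶜ, (1 - x j)) * f S

variable {α : ι → Type*} [∀ j, Fintype (α j)] (p : ∀ j, α j → Prop) [∀ j, DecidablePred (p j)]

theorem prod_sum_filter_mul_prod_compl_sum_filter_not [CommSemiring R] (w : ∀ j, α j → R)
    (S : Finset ι) :
    (∏ j ∈ S, ∑ a with p j a, w j a) * (∏ j ∈ Sᶜ, ∑ a with ¬p j a, w j a) =
      ∑ q : ∀ j, α j with ({j | p j (q j)} : Finset ι) = S, ∏ j, w j (q j) := by
  have prod_mem : ∏ j ∈ S, ∑ a with p j a, w j a = ∏ j ∈ S, ∑ a with (p j a ↔ j ∈ S), w j a :=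
    prod_congr rfl fun j hj => by simp only [hj, iff_true]
  have prod_notMem :
      ∏ j ∈ Sᶜ, ∑ a with ¬p j a, w j a = ∏ j ∈ Sᶜ, ∑ a with (p j a ↔ j ∈ S), w j a :=
    prod_congr rfl fun j hj => by simp only [mem_compl.mp hj, iff_false]
  rw [prod_mem, prod_notMem, prod_mul_prod_compl, prod_univ_sum]
  congr 1
  ext q
  simp only [Fintype.mem_piFinset, mem_filter_univ, Finset.ext_iff]

theorem sum_prod_mul_eq_multilinearExtension [CommRing R] (w : ∀ j, α j → R)
    (hw : ∀ j, ∑ a, w j a = 1) (f : Finset ι → R) :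
    ∑ q : ∀ j, α j, (∏ j, w j (q j)) * f {j | p j (q j)} =
      multilinearExtension f fun j => ∑ a with p j a, w j a := by
  have one_sub (j : ι) : 1 - ∑ a with p j a, w j a = ∑ a with ¬p j a, w j a := by
    rw [← hw j, ← sum_filter_add_sum_filter_not univ (p j), add_sub_cancel_left]
  simp only [multilinearExtension, one_sub, prod_sum_filter_mul_prod_compl_sum_filter_not, sum_mul]
  rw [← sum_fiberwise univ fun q : ∀ j, α j => ({j | p j (q j)} : Finset ι)]
  refine sum_congr rfl fun S _ => sum_congr rfl fun q hq => ?_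
  rw [(mem_filter.mp hq).2]

end IndependentSampling

theorem sum_range_succ_eq_sum_Icc_add {M : Type*} [AddCommMonoid M] (f : ℕ → M) (k : ℕ) :
    ∑ l ∈ range (k + 1), f l = ∑ l ∈ Icc 1 k, f l + f 0 := by
  rw [sum_range_succ', range_eq_Ico, sum_Ico_add' f 0 k 1, zero_add, Ico_add_one_right_eq_Icc]

theorem sum_sum_range_load_succ_eq_rosenthal_add (n m : ℕ) (c : Fin m → ℕ → ℝ)
    (q : Fin n → Finset (Fin m)) :
    ∑ e, ∑ l ∈ range (load n m q e + 1), c e l = rosenthal n m c q + ∑ e, c e 0 := by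
  simp only [sum_range_succ_eq_sum_Icc_add, sum_add_distrib, rosenthal]

theorem multilinearPotential_marginal_eq_sum (n m : ℕ) (c : Fin m → ℕ → ℝ)
    (π : Fin n → Finset (Fin m) → ℝ) (hsum : ∀ i, ∑ s, π i s = 1) :
    multilinearPotential n m c (marginal n m π) =
      ∑ q : Fin n → Finset (Fin m),
        (∏ j, π j (q j)) * ∑ e, ∑ l ∈ range (load n m q e + 1), c e l := by
  have resource (e : Fin m) :
      ∑ q : Fin n → Finset (Fin m),
          (∏ j, π j (q j)) * ∑ l ∈ range (load n m q e + 1), c e l =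
        multilinearExtension (fun S => ∑ l ∈ range (#S + 1), c e l)
          fun j => marginal n m π j e := by
    simp only [marginal, ← sum_filter]
    exact sum_prod_mul_eq_multilinearExtension (fun _ s => e ∈ s) π hsum
      fun S => ∑ l ∈ range (#S + 1), c e l
  simp only [mul_sum univ]
  rw [sum_comm]
  exact sum_congr rfl fun e _ => (resource e).symm

theorem expected_rosenthal_eq_multilinear_general (n m : ℕ) (c : Fin m → ℕ → ℝ)
    (π : Fin n → Finset (Fin m) → ℝ) (hsum : ∀ i, ∑ s, π i s = 1) :
    ∑ q : Fin n → Finset (Fin m), (∏ j, π j (q j)) * rosenthal n m c q =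
      multilinearPotential n m c (marginal n m π) - ∑ e, c e 0 := by
  have total_mass : ∑ q : Fin n → Finset (Fin m), ∏ j, π j (q j) = 1 := by
    rw [← Fintype.prod_sum]
    exact prod_eq_one fun i _ => hsum i
  rw [multilinearPotential_marginal_eq_sum n m c π hsum]
  simp only [sum_sum_range_load_succ_eq_rosenthal_add, mul_add, sum_add_distrib]
  rw [← sum_mul, total_mass, one_mul, add_sub_cancel_right]

theorem expected_rosenthal_eq_multilinear
    (n m : ℕ) (c : Fin m → ℕ → ℝ) (cmax : ℝ)
    (hmono : ∀ e, Monotone (c e))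
    (hc : ∀ e k, 0 ≤ c e k ∧ c e k ≤ cmax)
    (hzero : ∀ e, c e 0 = 0)
    (S : Fin n → Set (Finset (Fin m))) (hS : ∀ i, (S i).Nonempty)
    (π : Fin n → Finset (Fin m) → ℝ)
    (hnn : ∀ i s, 0 ≤ π i s)
    (hsum : ∀ i, ∑ s : Finset (Fin m), π i s = 1)
    (hsupp : ∀ i s, π i s ≠ 0 → s ∈ S i) :
    (∑ q : Fin n → Finset (Fin m), (∏ j, π j (q j)) * rosenthal n m c q)
      = multilinearPotential n m c (marginal n m π) := by
  simpa only [hzero, sum_const_zero, sub_zero] using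
    expected_rosenthal_eq_multilinear_general n m c π hsum

end
end

section
/- For mixed profiles π = (π_i, π_{-i}) and π' = (π_i', π_{-i}) of a congestion game that differ only in agent i's mixed strategy, with marginalizations x and x' (so x_j = x'_j for all j ≠ i), the expected cost difference equals the multilinear potential difference: C_i(π_i, π_{-i}) − C_i(π_i', π_{-i}) = Φ(x) − Φ(x'). -/
/-!
STATEMENT 2: For mixed profiles `π = (π_i, π_{-i})` and `π' = (π_i', π_{-i})` of a
congestion game that differ only in agent `i`'s mixed strategy, with marginalizations
`x` and `x'`, the expected cost difference equals the multilinear potential difference: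
`C_i(π_i, π_{-i}) − C_i(π_i', π_{-i}) = Φ(x) − Φ(x')`.
-/

open Finset

noncomputable section

/-- Expected cost of agent `i` under the product of the mixed strategies `π`. -/
def expCost (n m : ℕ) (c : Fin m → ℕ → ℝ) (π : Fin n → Finset (Fin m) → ℝ)
    (i : Fin n) : ℝ :=
  ∑ q : Fin n → Finset (Fin m), (∏ j, π j (q j)) * agentCost n m c i q

/-!
Split the random set of users of each resource `e` into agent `i`'s own choice and the random set
`T` of the other users. Agent `i` pays `c e (|T| + 1)` exactly when using `e`, and this is also the
increment of the potential when `i` joins `T`. Hence `Φ(x) = C_i(π) + Φ_{-i}(x)`, where `Φ_{-i}` is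
the potential of the game without agent `i`, and the last term does not see a deviation of `i`.
-/

section WeightedSubsetSum

variable {ι R : Type*} [DecidableEq ι] [CommSemiring R]

/-- The sum of `F` over all subsets of `s`, where `p` weighs the elements inside the subset and `q`
those outside it. For `q = 1 - p` this is the multilinear extension of `F`, i.e. its expectation at
a random subset of `s` containing each `j` independently with probability `p j`; keeping `q`
separate covers weights that are not normalized. -/
def weightedSubsetSum (s : Finset ι) (p q : ι → R) (F : Finset ι → R) : R :=
  ∑ T ∈ s.powerset, (∏ j ∈ T, p j) * (∏ j ∈ s \ T, q j) * F T

lemma weightedSubsetSum_congr {s : Finset ι} {p p' q q' : ι → R} {F F' : Finset ι → R}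
    (hp : ∀ j ∈ s, p j = p' j) (hq : ∀ j ∈ s, q j = q' j) (hF : ∀ T ⊆ s, F T = F' T) :
    weightedSubsetSum s p q F = weightedSubsetSum s p' q' F' := by
  refine sum_congr rfl fun T hT => ?_
  have hTs : T ⊆ s := mem_powerset.1 hT
  rw [prod_congr rfl fun j hj => hp j (hTs hj),
    prod_congr rfl fun j hj => hq j (sdiff_subset hj), hF T hTs]

lemma weightedSubsetSum_add (s : Finset ι) (p q : ι → R) (F G : Finset ι → R) :
    weightedSubsetSum s p q (fun T => F T + G T) =
      weightedSubsetSum s p q F + weightedSubsetSum s p q G := by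
  simp only [weightedSubsetSum, mul_add, sum_add_distrib]

lemma weightedSubsetSum_zero (s : Finset ι) (p q : ι → R) :
    weightedSubsetSum s p q (fun _ => 0) = 0 := by
  simp only [weightedSubsetSum, mul_zero, sum_const_zero]

lemma weightedSubsetSum_insert {s : Finset ι} {i : ι} (hi : i ∉ s) (p q : ι → R)
    (F : Finset ι → R) :
    weightedSubsetSum (insert i s) p q F =
      p i * weightedSubsetSum s p q (fun T => F (insert i T)) +
        q i * weightedSubsetSum s p q F := by
  simp only [weightedSubsetSum]
  rw [sum_powerset_insert hi, add_comm, mul_sum, mul_sum]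
  congr 1 <;> refine sum_congr rfl fun T hT => ?_
  all_goals have hiT : i ∉ T := fun h => hi (mem_powerset.1 hT h)
  · rw [prod_insert hiT, insert_sdiff_insert, sdiff_insert_of_notMem hi]
    ring
  · rw [insert_sdiff_of_notMem s hiT, prod_insert fun h => hi (sdiff_subset h)]
    ring

lemma weightedSubsetSum_univ [Fintype ι] (i : ι) (p q : ι → R) (F : Finset ι → R) :
    weightedSubsetSum univ p q F =
      p i * weightedSubsetSum (univ.erase i) p q (fun T => F (insert i T)) +
        q i * weightedSubsetSum (univ.erase i) p q F := by
  rw [← weightedSubsetSum_insert (notMem_erase i univ), insert_erase (mem_univ i)]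

lemma sum_prod_mul_eq_weightedSubsetSum {α : Type*} [Fintype ι] [Fintype α] (w : ι → α → R)
    (P : α → Prop) [DecidablePred P] (F : Finset ι → R) :
    ∑ f : ι → α, (∏ j, w j (f j)) * F {j | P (f j)} =
      weightedSubsetSum univ (fun j => ∑ a with P a, w j a) (fun j => ∑ a with ¬P a, w j a) F := by
  classical
  rw [weightedSubsetSum, powerset_univ,
    ← sum_fiberwise univ fun f : ι → α => ({j | P (f j)} : Finset ι)]
  refine sum_congr rfl fun T _ => ?_
  have fiber_eq : ({f | ({j | P (f j)} : Finset ι) = T} : Finset (ι → α)) =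
      Fintype.piFinset fun j => {a | P a ↔ j ∈ T} := by
    ext f
    simp [Finset.ext_iff]
  have weight_eq : (∏ j ∈ T, ∑ a with P a, w j a) * ∏ j ∈ univ \ T, ∑ a with ¬P a, w j a =
      ∏ j, ∑ a with (P a ↔ j ∈ T), w j a := by
    rw [← prod_mul_prod_compl T, compl_eq_univ_sdiff]
    congr 1 <;> refine prod_congr rfl fun j hj => ?_
    · simp only [hj, iff_true]
    · simp only [(mem_sdiff.1 hj).2, iff_false]
  rw [weight_eq, prod_univ_sum, sum_mul, ← fiber_eq]
  refine sum_congr rfl fun f hf => ?_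
  rw [(mem_filter.1 hf).2]

end WeightedSubsetSum

section CongestionGame

variable {n m : ℕ}

lemma agentCost_eq_sum_ite (c : Fin m → ℕ → ℝ) (i : Fin n) (q : Fin n → Finset (Fin m)) :
    agentCost n m c i q = ∑ e, if e ∈ q i then c e (load n m q e) else 0 := by
  simp only [agentCost, sum_ite_mem, univ_inter]

lemma sum_filter_mem_eq_marginal (π : Fin n → Finset (Fin m) → ℝ) (j : Fin n) (e : Fin m) :
    ∑ s with e ∈ s, π j s = marginal n m π j e :=
  sum_filter _ _

lemma sum_filter_notMem_eq_one_sub_marginal {π : Fin n → Finset (Fin m) → ℝ} {j : Fin n}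
    (hsum : ∑ s, π j s = 1) (e : Fin m) :
    ∑ s with e ∉ s, π j s = 1 - marginal n m π j e := by
  rw [← hsum, ← sum_filter_mem_eq_marginal, eq_sub_iff_add_eq', sum_filter_add_sum_filter_not]

lemma expCost_eq_sum_marginal_mul (c : Fin m → ℕ → ℝ) {π : Fin n → Finset (Fin m) → ℝ} {i : Fin n}
    (hsum : ∀ j ≠ i, ∑ s, π j s = 1) :
    expCost n m c π i =
      ∑ e, marginal n m π i e *
        weightedSubsetSum (univ.erase i) (marginal n m π · e) (1 - marginal n m π · e)
          fun T => c e (#T + 1) := by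
  simp only [expCost, agentCost_eq_sum_ite, mul_sum]
  rw [sum_comm]
  refine sum_congr rfl fun e _ => ?_
  let F : Finset (Fin n) → ℝ := fun T => if i ∈ T then c e #T else 0
  have cost_eq (q : Fin n → Finset (Fin m)) :
      (if e ∈ q i then c e (load n m q e) else 0) = F {j | e ∈ q j} := by
    simp only [F, load, mem_filter_univ]
  have F_insert (T : Finset (Fin n)) (hT : T ⊆ univ.erase i) : F (insert i T) = c e (#T + 1) := by
    simp only [F, mem_insert_self, if_true, card_insert_of_notMem (subset_erase.1 hT).2]
  have F_others (T : Finset (Fin n)) (hT : T ⊆ univ.erase i) : F T = 0 :=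
    if_neg (subset_erase.1 hT).2
  have notMem_eq (j : Fin n) (hj : j ∈ univ.erase i) :
      ∑ s with e ∉ s, π j s = 1 - marginal n m π j e :=
    sum_filter_notMem_eq_one_sub_marginal (hsum j (ne_of_mem_erase hj)) e
  simp only [cost_eq]
  rw [sum_prod_mul_eq_weightedSubsetSum π (e ∈ ·), weightedSubsetSum_univ i,
    weightedSubsetSum_congr (fun _ _ => rfl) (fun _ _ => rfl) F_others, weightedSubsetSum_zero,
    mul_zero, add_zero, sum_filter_mem_eq_marginal,
    weightedSubsetSum_congr (fun j _ => sum_filter_mem_eq_marginal π j e) notMem_eq F_insert]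

/-- The multilinear potential of the game without agent `i`. -/
def potentialWithout (c : Fin m → ℕ → ℝ) (i : Fin n) (x : Fin n → Fin m → ℝ) : ℝ :=
  ∑ e, weightedSubsetSum (univ.erase i) (x · e) (1 - x · e) fun T => ∑ l ∈ range (#T + 1), c e l

lemma potentialWithout_congr (c : Fin m → ℕ → ℝ) {i : Fin n} {x y : Fin n → Fin m → ℝ}
    (hxy : ∀ j ≠ i, x j = y j) : potentialWithout c i x = potentialWithout c i y := by
  refine sum_congr rfl fun e _ => ?_
  have coord_eq (j : Fin n) (hj : j ∈ univ.erase i) : x j e = y j e :=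
    congrFun (hxy j (ne_of_mem_erase hj)) e
  exact weightedSubsetSum_congr coord_eq (fun j hj => by rw [coord_eq j hj]) fun _ _ => rfl

lemma multilinearPotential_eq_sum_add_potentialWithout (c : Fin m → ℕ → ℝ) (i : Fin n)
    (x : Fin n → Fin m → ℝ) :
    multilinearPotential n m c x =
      ∑ e, x i e * weightedSubsetSum (univ.erase i) (x · e) (1 - x · e) (fun T => c e (#T + 1)) +
        potentialWithout c i x := by
  rw [potentialWithout, ← sum_add_distrib]
  refine sum_congr rfl fun e _ => ?_
  have potential_insert (T : Finset (Fin n)) (hT : T ⊆ univ.erase i) :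
      ∑ l ∈ range (#(insert i T) + 1), c e l =
        ∑ l ∈ range (#T + 1), c e l + c e (#T + 1) := by
    rw [card_insert_of_notMem (subset_erase.1 hT).2, sum_range_succ]
  simp only [compl_eq_univ_sdiff, ← powerset_univ]
  rw [← weightedSubsetSum, weightedSubsetSum_univ i,
    weightedSubsetSum_congr (fun _ _ => rfl) (fun _ _ => rfl) potential_insert,
    weightedSubsetSum_add]
  ring

lemma multilinearPotential_marginal_eq_expCost_add (c : Fin m → ℕ → ℝ)
    {π : Fin n → Finset (Fin m) → ℝ} {i : Fin n} (hsum : ∀ j ≠ i, ∑ s, π j s = 1) :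
    multilinearPotential n m c (marginal n m π) =
      expCost n m c π i + potentialWithout c i (marginal n m π) := by
  rw [multilinearPotential_eq_sum_add_potentialWithout c i, expCost_eq_sum_marginal_mul c hsum]

theorem expected_cost_diff_eq_multilinear_potential_diff_general (c : Fin m → ℕ → ℝ)
    {π π' : Fin n → Finset (Fin m) → ℝ} {i : Fin n} (hsum : ∀ j ≠ i, ∑ s, π j s = 1)
    (hdiff : ∀ j ≠ i, π j = π' j) :
    expCost n m c π i - expCost n m c π' i
      = multilinearPotential n m c (marginal n m π)
        - multilinearPotential n m c (marginal n m π') := by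
  have hsum' : ∀ j ≠ i, ∑ s, π' j s = 1 := fun j hj => hdiff j hj ▸ hsum j hj
  have marginal_eq : ∀ j ≠ i, marginal n m π j = marginal n m π' j := fun j hj => by
    funext e
    rw [marginal, marginal, hdiff j hj]
  rw [multilinearPotential_marginal_eq_expCost_add c hsum,
    multilinearPotential_marginal_eq_expCost_add c hsum', potentialWithout_congr c marginal_eq,
    add_sub_add_right_eq_sub]

end CongestionGame

theorem expected_cost_diff_eq_multilinear_potential_diff
    (n m : ℕ) (c : Fin m → ℕ → ℝ) (cmax : ℝ)
    (hmono : ∀ e, Monotone (c e))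
    (hc : ∀ e k, 0 ≤ c e k ∧ c e k ≤ cmax)
    (S : Fin n → Set (Finset (Fin m))) (hS : ∀ i, (S i).Nonempty)
    (π π' : Fin n → Finset (Fin m) → ℝ)
    (hnn : ∀ i s, 0 ≤ π i s) (hnn' : ∀ i s, 0 ≤ π' i s)
    (hsum : ∀ i, ∑ s : Finset (Fin m), π i s = 1)
    (hsum' : ∀ i, ∑ s : Finset (Fin m), π' i s = 1)
    (hsupp : ∀ i s, π i s ≠ 0 → s ∈ S i)
    (hsupp' : ∀ i s, π' i s ≠ 0 → s ∈ S i)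
    (i : Fin n)
    (hdiff : ∀ j, j ≠ i → π j = π' j) :
    expCost n m c π i - expCost n m c π' i
      = multilinearPotential n m c (marginal n m π)
        - multilinearPotential n m c (marginal n m π') := by
  exact expected_cost_diff_eq_multilinear_potential_diff_general c (fun j _ => hsum j) hdiff

end
end

section
/- Prefix decomposition lemma: let s ∈ ℕ, let p : {1,…,s} → {1,…,s} ∪ {⊥}, and let r : {1,…,s} ∪ {⊥} → ℝ^s satisfy r(⊥) = 0 and, for every h ∈ {1,…,s}, r(h) − r(p(h)) = e_h, where e_h is the h-th standard basis vector of ℝ^s. Then for every set S ⊆ {1,…,s} on which p is injective (p(h) = p(k) with h, k ∈ S implies h = k), there exist coefficients α_1,…,α_s with each α_h ∈ {−1, 0, 1} such that Σ_{h∈S} e_h = Σ_{h=1}^{s} α_h · r(h). -/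
/-!
STATEMENT 12 (Prefix decomposition lemma): let `s ∈ ℕ`, `p : {1,…,s} → {1,…,s} ∪ {⊥}`,
and `r : {1,…,s} ∪ {⊥} → ℝ^s` with `r(⊥) = 0` and `r(h) − r(p(h)) = e_h` for every
`h`, where `e_h` is the `h`-th standard basis vector. Then for every `S ⊆ {1,…,s}`
on which `p` is injective, there exist coefficients `α_h ∈ {−1,0,1}` such that
`Σ_{h∈S} e_h = Σ_{h=1}^{s} α_h · r(h)`.
-/

open Finset

/-! Summing `r h - r (p h)` over `S` gives the sum of `r` over `S` minus the sum of `r` over the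
image of `S` under `p`, because injectivity of `p` on `S` prevents repetitions; `none` contributes
nothing since `r none = 0`. The coefficient of `r h` is therefore a difference of two indicators. -/

theorem sum_comp_eq_sum_eraseNone_image {κ ι M : Type*} [DecidableEq (Option ι)] [AddCommMonoid M]
    {p : κ → Option ι} {S : Finset κ} (hp : Set.InjOn p S) {r : Option ι → M} (hr : r none = 0) :
    ∑ h ∈ S, r (p h) = ∑ k ∈ eraseNone (S.image p), r (some k) :=
  calc ∑ h ∈ S, r (p h)
    _ = ∑ o ∈ S.image p, r o := (sum_image hp).symm
    _ = ∑ o ∈ (S.image p).erase none, r o := (sum_erase _ hr).symm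
    _ = ∑ k ∈ eraseNone (S.image p), r (some k) := by
      rw [← map_some_eraseNone, sum_map, Function.Embedding.some_apply]

section IndicatorSub

variable {ι : Type*} (R : Type*) [Ring R] (A B : Finset ι)

/-- The difference of the indicator functions of `A` and `B`, as a finitely supported function.
It is written as a sum of `Finsupp.single`s so that linear maps can be applied termwise. -/
noncomputable def indicatorSub : ι →₀ R :=
  ∑ a ∈ A, Finsupp.single a 1 - ∑ b ∈ B, Finsupp.single b 1

theorem indicatorSub_apply [DecidableEq ι] (i : ι) :
    indicatorSub R A B i = (if i ∈ A then 1 else 0) - (if i ∈ B then 1 else 0) := by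
  simp [indicatorSub, Finsupp.single_apply]

theorem indicatorSub_apply_eq_neg_one_or_zero_or_one (i : ι) :
    indicatorSub R A B i = -1 ∨ indicatorSub R A B i = 0 ∨ indicatorSub R A B i = 1 := by
  classical
  rw [indicatorSub_apply]
  split_ifs <;> simp

theorem linearCombination_indicatorSub {M : Type*} [AddCommGroup M] [Module R M] (v : ι → M) :
    Finsupp.linearCombination R v (indicatorSub R A B) = ∑ a ∈ A, v a - ∑ b ∈ B, v b := by
  simp [indicatorSub]

end IndicatorSub

theorem prefix_decomposition_general {ι M : Type*} (R : Type*) [Ring R] [AddCommGroup M]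
    [Module R M] {p : ι → Option ι} {r : Option ι → M} (hr : r none = 0) {S : Finset ι}
    (hp : Set.InjOn p S) :
    ∃ α : ι →₀ R, (∀ h, α h = -1 ∨ α h = 0 ∨ α h = 1) ∧
      ∑ h ∈ S, (r (some h) - r (p h)) = Finsupp.linearCombination R (fun h => r (some h)) α := by
  classical
  refine ⟨indicatorSub R S (eraseNone (S.image p)),
    indicatorSub_apply_eq_neg_one_or_zero_or_one R _ _, ?_⟩
  rw [linearCombination_indicatorSub, sum_sub_distrib, sum_comp_eq_sum_eraseNone_image hp hr]

theorem prefix_decomposition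
    (s : ℕ) (p : Fin s → Option (Fin s))
    (r : Option (Fin s) → (Fin s → ℝ))
    (hr0 : r none = 0)
    (hrstep : ∀ h : Fin s, r (some h) - r (p h) = Pi.single h 1)
    (S : Finset (Fin s))
    (hinj : ∀ h ∈ S, ∀ k ∈ S, p h = p k → h = k) :
    ∃ α : Fin s → ℝ,
      (∀ h, α h = -1 ∨ α h = 0 ∨ α h = 1) ∧
      (∑ h ∈ S, Pi.single h (1 : ℝ)) = ∑ h : Fin s, α h • r (some h) := by
  obtain ⟨α, hα, hsum⟩ := prefix_decomposition_general ℝ hr0 (S := S) hinj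
  refine ⟨α, hα, ?_⟩
  simpa only [hrstep, Finsupp.linearCombination_apply, Finsupp.sum_fintype, zero_smul,
    implies_true] using hsum
end

section
/- Abstract 1-spanner theorem: let R : ℝ^m → ℝ^s and F : ℝ^s → ℝ^m be linear maps, let b_1,…,b_s ∈ ℝ^m satisfy F(R(b_h)) = b_h for every h, let p : {1,…,s} → {1,…,s} ∪ {⊥}, and define r : {1,…,s} ∪ {⊥} → ℝ^s by r(⊥) = 0 and r(h) = R(b_h); assume r(h) − r(p(h)) = e_h for every h, where e_h is the h-th standard basis vector of ℝ^s. Let x ∈ ℝ^m satisfy F(R(x)) = x and R(x) = Σ_{h∈S} e_h for some set S ⊆ {1,…,s} on which p is injective. Then there exist α_1,…,α_s ∈ ℝ with α_h² ≤ 1 for every h and x = Σ_{h=1}^{s} α_h b_h. -/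
/-!
STATEMENT 13 (Abstract 1-spanner theorem): let `R : ℝ^m → ℝ^s` and `F : ℝ^s → ℝ^m`
be linear maps, `b_1,…,b_s ∈ ℝ^m` with `F(R(b_h)) = b_h`, `p : {1,…,s} → {1,…,s} ∪ {⊥}`,
and `r : {1,…,s} ∪ {⊥} → ℝ^s` with `r(⊥) = 0` and `r(h) = R(b_h)`; assume
`r(h) − r(p(h)) = e_h` for every `h`. Let `x ∈ ℝ^m` satisfy `F(R(x)) = x` and
`R(x) = Σ_{h∈S} e_h` for some `S` on which `p` is injective. Then there exist
`α_1,…,α_s ∈ ℝ` with `α_h² ≤ 1` and `x = Σ_{h=1}^{s} α_h b_h`.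
-/

open Finset

/-!
With the convention `b ⊥ = 0`, applying `F` to `R x = ∑ h ∈ S, (r h - r (p h))` gives
`x = ∑ h ∈ S, (b h - b (p h))`. In this sum each `b k` occurs positively at most once, namely when
`k ∈ S`, and negatively at most once, because `p` is injective on `S`.
-/

section

variable {ι M N : Type*}

/-- The coefficients, in terms of the spanner paths `b`, of the vector
`∑ h ∈ S, (b h - b (p h))`, where `h` contributes `b h` alone if `p h = none`. They are
integers, finitely supported so that the index type may be infinite. -/
noncomputable def spannerCoeff (S : Finset ι) (p : ι → Option ι) : ι →₀ ℤ :=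
  ∑ h ∈ S, (Finsupp.single h 1 - (p h).elim 0 fun k ↦ Finsupp.single k 1)

theorem linearCombination_spannerCoeff [AddCommGroup M] (S : Finset ι) (p : ι → Option ι)
    (b : ι → M) :
    Finsupp.linearCombination ℤ b (spannerCoeff S p) = ∑ h ∈ S, (b h - (p h).elim 0 b) := by
  rw [spannerCoeff, map_sum]
  refine sum_congr rfl fun h _ ↦ ?_
  cases p h <;> simp

theorem spannerCoeff_apply [DecidableEq ι] (S : Finset ι) (p : ι → Option ι) (k : ι) :
    spannerCoeff S p k = (if k ∈ S then 1 else 0) - (#{h ∈ S | p h = some k} : ℤ) := by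
  have elim_apply (o : Option ι) :
      (o.elim 0 fun j ↦ Finsupp.single j (1 : ℤ)) k = if o = some k then 1 else 0 := by
    cases o <;> simp [Finsupp.single_apply]
  simp [spannerCoeff, elim_apply, Finsupp.single_apply]

theorem abs_spannerCoeff_le_one {S : Finset ι} {p : ι → Option ι} (hp : Set.InjOn p S) (k : ι) :
    |spannerCoeff S p k| ≤ 1 := by
  classical
  have card_le : #{h ∈ S | p h = some k} ≤ 1 := card_le_one.2 fun i hi j hj ↦ by
    rw [mem_filter] at hi hj
    exact hp hi.1 hj.1 (hi.2.trans hj.2.symm)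
  rw [spannerCoeff_apply, abs_le]
  split_ifs <;> omega

theorem abstract_one_spanner_general [AddCommGroup M] [AddCommGroup N] (R : M → N) (F : N →+ M)
    (b : ι → M) (hb : ∀ h, F (R (b h)) = b h) (p : ι → Option ι)
    (r : Option ι → N) (hrnone : r none = 0) (hrsome : ∀ h, r (some h) = R (b h))
    (e : ι → N) (hrstep : ∀ h, r (some h) - r (p h) = e h)
    (x : M) (hx : F (R x) = x) (S : Finset ι) (hxS : R x = ∑ h ∈ S, e h) (hp : Set.InjOn p S) :
    ∃ α : ι →₀ ℤ, (∀ h, |α h| ≤ 1) ∧ x = Finsupp.linearCombination ℤ b α := by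
  refine ⟨spannerCoeff S p, abs_spannerCoeff_le_one hp, ?_⟩
  have map_r (o : Option ι) : F (r o) = o.elim 0 b := by
    cases o <;> simp [hrnone, hrsome, hb]
  calc
    x = F (∑ h ∈ S, (r (some h) - r (p h))) := by simp only [hrstep, ← hxS, hx]
    _ = ∑ h ∈ S, (b h - (p h).elim 0 b) := by simp only [map_sum, map_sub, map_r, Option.elim_some]
    _ = Finsupp.linearCombination ℤ b (spannerCoeff S p) :=
      (linearCombination_spannerCoeff S p b).symm

end

theorem abstract_one_spanner
    (m s : ℕ)
    (R : (Fin m → ℝ) →ₗ[ℝ] (Fin s → ℝ))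
    (F : (Fin s → ℝ) →ₗ[ℝ] (Fin m → ℝ))
    (b : Fin s → (Fin m → ℝ))
    (hb : ∀ h, F (R (b h)) = b h)
    (p : Fin s → Option (Fin s))
    (r : Option (Fin s) → (Fin s → ℝ))
    (hrnone : r none = 0)
    (hrsome : ∀ h : Fin s, r (some h) = R (b h))
    (hrstep : ∀ h : Fin s, r (some h) - r (p h) = Pi.single h 1)
    (x : Fin m → ℝ) (hx : F (R x) = x)
    (S : Finset (Fin s))
    (hxS : R x = ∑ h ∈ S, Pi.single h (1 : ℝ))
    (hinj : ∀ h ∈ S, ∀ k ∈ S, p h = p k → h = k) :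
    ∃ α : Fin s → ℝ,
      (∀ h, (α h) ^ 2 ≤ 1) ∧ x = ∑ h : Fin s, α h • b h := by
  obtain ⟨α, hα, rfl⟩ := abstract_one_spanner_general R F.toAddMonoidHom b hb p r hrnone hrsome _
    hrstep x hx S hxS hinj
  have sq_le_one (h : Fin s) : (α h : ℝ) ^ 2 ≤ 1 :=
    mod_cast (sq_le_one_iff_abs_le_one (α h)).2 (hα h)
  exact ⟨fun h ↦ α h, sq_le_one, by
    simp [Finsupp.linearCombination_apply, Finsupp.sum_fintype, Int.cast_smul_eq_zsmul]⟩
end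

section
/- Proximal point inequality: let λ > 0, let D ⊆ ℝ^d be nonempty, closed and convex, and let f : ℝ^d → ℝ be differentiable with (1/λ)-Lipschitz gradient. Let α ∈ D and let y ∈ D be a minimizer over D of the function y ↦ f(y) + (1/λ)‖α − y‖₂². Then ⟨∇f(α), α − y⟩ ≥ (1/(2λ))·‖y − α‖₂². -/
/-!
STATEMENT 14 (Proximal point inequality): let `λ > 0`, `D ⊆ ℝ^d` nonempty, closed
and convex, and `f : ℝ^d → ℝ` differentiable with `(1/λ)`-Lipschitz gradient. Let
`α ∈ D` and `y ∈ D` be a minimizer over `D` of `y ↦ f(y) + (1/λ)‖α − y‖₂²`. Then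
`⟨∇f(α), α − y⟩ ≥ (1/(2λ))·‖y − α‖₂²`.
-/

open RealInnerProductSpace

/-!
Comparing the minimizer `y` with the competitor `α` gives `‖α - y‖² / λ ≤ f α - f y`. Since `∇f` is
`1/λ`-Lipschitz, the linearization `⟪∇f α, α - y⟫` differs from `f α - f y` by at most
`‖α - y‖² / (2λ)`, so half of the decrease survives.
-/

open AffineMap Set

section FirstOrderRemainder

variable {E F : Type*} [NormedAddCommGroup E] [NormedSpace ℝ E]
  [NormedAddCommGroup F] [NormedSpace ℝ F]

lemma hasDerivWithinAt_sub_sub_smul_lineMap {f : E → F} {A B : E →L[ℝ] F} {s : Set E}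
    {x y : E} {t : ℝ} (hs : Convex ℝ s) (hx : x ∈ s) (hy : y ∈ s)
    (hf : HasFDerivWithinAt f A s (lineMap x y t)) :
    HasDerivWithinAt (fun r : ℝ ↦ f (lineMap x y r) - f x - r • B (y - x))
      ((A - B) (y - x)) (Icc 0 1) t := by
  have hcomp := hf.comp_hasDerivWithinAt t hasDerivWithinAt_lineMap (hs.mapsTo_lineMap hx hy)
  simpa using (hcomp.sub_const (f x)).fun_sub ((hasDerivWithinAt_id t _).smul_const (B (y - x)))

theorem norm_sub_sub_fderiv_le_half_mul_sq {f : E → F} {f' : E → E →L[ℝ] F} {s : Set E}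
    {x y : E} {K : ℝ} (hs : Convex ℝ s) (hx : x ∈ s) (hy : y ∈ s)
    (hf : ∀ z ∈ s, HasFDerivWithinAt f (f' z) s z)
    (hf' : ∀ z ∈ s, ‖f' z - f' x‖ ≤ K * ‖z - x‖) :
    ‖f y - f x - f' x (y - x)‖ ≤ K / 2 * ‖y - x‖ ^ 2 := by
  let R : ℝ → F := fun t ↦ f (lineMap x y t) - f x - t • f' x (y - x)
  have hR : ∀ t ∈ Icc (0 : ℝ) 1,
      HasDerivWithinAt R ((f' (lineMap x y t) - f' x) (y - x)) (Icc 0 1) t := fun t ht ↦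
    hasDerivWithinAt_sub_sub_smul_lineMap hs hx hy (hf _ (hs.lineMap_mem hx hy ht))
  have hB (t : ℝ) : HasDerivAt (fun t ↦ K / 2 * ‖y - x‖ ^ 2 * t ^ 2) (K * ‖y - x‖ ^ 2 * t) t := by
    refine ((hasDerivAt_pow 2 t).const_mul (K / 2 * ‖y - x‖ ^ 2)).congr_deriv ?_
    push_cast
    ring
  have hbound : ∀ t ∈ Ico (0 : ℝ) 1,
      ‖(f' (lineMap x y t) - f' x) (y - x)‖ ≤ K * ‖y - x‖ ^ 2 * t := by
    intro t ht
    have hdist : ‖lineMap x y t - x‖ = t * ‖y - x‖ := by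
      rw [lineMap_apply_module', add_sub_cancel_right, norm_smul, Real.norm_of_nonneg ht.1]
    calc ‖(f' (lineMap x y t) - f' x) (y - x)‖
        ≤ ‖f' (lineMap x y t) - f' x‖ * ‖y - x‖ := ContinuousLinearMap.le_opNorm _ _
      _ ≤ K * ‖lineMap x y t - x‖ * ‖y - x‖ := by
        gcongr
        exact hf' _ (hs.lineMap_mem hx hy (Ico_subset_Icc_self ht))
      _ = K * ‖y - x‖ ^ 2 * t := by rw [hdist]; ring
  have hR_one : ‖R 1‖ ≤ K / 2 * ‖y - x‖ ^ 2 * 1 ^ 2 :=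
    image_norm_le_of_norm_deriv_right_le_deriv_boundary
      (fun t ht ↦ (hR t ht).continuousWithinAt)
      (fun t ht ↦ (hR t (Ico_subset_Icc_self ht)).mono_of_mem_nhdsWithin (Icc_mem_nhdsGE_of_mem ht))
      (by simp [R]) hB hbound (right_mem_Icc.2 zero_le_one)
  simpa [R] using hR_one

end FirstOrderRemainder

section Gradient

variable {E : Type*} [NormedAddCommGroup E] [InnerProductSpace ℝ E] [CompleteSpace E]
  {f : E → ℝ} {g : E → E} {s : Set E} {x y : E} {K c : ℝ}

theorem abs_sub_sub_inner_gradient_le_half_mul_sq (hs : Convex ℝ s) (hx : x ∈ s) (hy : y ∈ s)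
    (hf : ∀ z ∈ s, HasGradientWithinAt f (g z) s z)
    (hg : ∀ z ∈ s, ‖g z - g x‖ ≤ K * ‖z - x‖) :
    |f y - f x - ⟪g x, y - x⟫| ≤ K / 2 * ‖y - x‖ ^ 2 := by
  simpa using norm_sub_sub_fderiv_le_half_mul_sq hs hx hy (fun z hz ↦ (hf z hz).hasFDerivWithinAt)
    fun z hz ↦ by simpa only [← map_sub, LinearIsometryEquiv.norm_map] using hg z hz

theorem proximal_point_inequality_general (hs : Convex ℝ s) (hx : x ∈ s) (hy : y ∈ s)
    (hf : ∀ z ∈ s, HasGradientWithinAt f (g z) s z)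
    (hg : ∀ z ∈ s, ‖g z - g x‖ ≤ K * ‖z - x‖)
    (hle : f y + c * ‖y - x‖ ^ 2 ≤ f x) :
    (c - K / 2) * ‖y - x‖ ^ 2 ≤ ⟪g x, x - y⟫ := by
  have hremainder : -(K / 2 * ‖y - x‖ ^ 2) ≤ f y - f x - ⟪g x, y - x⟫ :=
    (abs_le.1 (abs_sub_sub_inner_gradient_le_half_mul_sq hs hx hy hf hg)).1
  rw [← neg_sub y x, inner_neg_right]
  linarith

end Gradient

theorem proximal_point_inequality
    (d : ℕ) (lam : ℝ) (hlam : 0 < lam)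
    (D : Set (EuclideanSpace ℝ (Fin d)))
    (hne : D.Nonempty) (hclosed : IsClosed D) (hconv : Convex ℝ D)
    (f : EuclideanSpace ℝ (Fin d) → ℝ)
    (hdiff : Differentiable ℝ f)
    (hlip : ∀ x y, ‖gradient f x - gradient f y‖ ≤ (1 / lam) * ‖x - y‖)
    (α : EuclideanSpace ℝ (Fin d)) (hα : α ∈ D)
    (y : EuclideanSpace ℝ (Fin d)) (hy : y ∈ D)
    (hymin : ∀ w ∈ D, f y + (1 / lam) * ‖α - y‖ ^ 2 ≤ f w + (1 / lam) * ‖α - w‖ ^ 2) :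
    ⟪gradient f α, α - y⟫ ≥ (1 / (2 * lam)) * ‖y - α‖ ^ 2 := by
  have hle : f y + 1 / lam * ‖y - α‖ ^ 2 ≤ f α := by
    simpa [norm_sub_rev α y] using hymin α hα
  linear_combination proximal_point_inequality_general hconv hα hy
    (fun z _ ↦ (hdiff z).hasGradientAt.hasFDerivAt.hasFDerivWithinAt) (fun z _ ↦ hlip z α) hle
end

section
/- Gap control: let λ > 0, let D ⊆ ℝ^d be nonempty, closed and convex, and let f : ℝ^d → ℝ be differentiable with (1/λ)-Lipschitz gradient. Let α ∈ D, let y ∈ D be a minimizer over D of y ↦ f(y) + (1/λ)‖α − y‖₂² (the proximal point of α), and let z ∈ D be the nearest point of D to α − (λ/2)∇f(α). Then the projected-gradient stationarity gap satisfies ‖z − α‖₂ ≤ (3/2)·‖y − α‖₂. -/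
/-!
STATEMENT 15 (Gap control): let `λ > 0`, `D ⊆ ℝ^d` nonempty, closed and convex, and
`f : ℝ^d → ℝ` differentiable with `(1/λ)`-Lipschitz gradient. Let `α ∈ D`, let
`y ∈ D` be a minimizer over `D` of `y ↦ f(y) + (1/λ)‖α − y‖₂²` (the proximal point
of `α`), and let `z ∈ D` be the nearest point of `D` to `α − (λ/2)∇f(α)`. Then the
projected-gradient stationarity gap satisfies `‖z − α‖₂ ≤ (3/2)·‖y − α‖₂`.
-/

/-
Stationarity of `y` says exactly that `y` is the nearest point of `D` to `α - (λ/2)∇f(y)`, whereas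
`z` is the nearest point of `D` to `α - (λ/2)∇f(α)`. Projections onto convex sets are nonexpansive,
so `‖z - y‖ ≤ (λ/2)‖∇f(y) - ∇f(α)‖ ≤ ‖y - α‖ / 2`, and the triangle inequality adds `‖y - α‖`.
-/

open scoped RealInnerProductSpace

section InnerProductSpace

variable {E : Type*} [NormedAddCommGroup E] [InnerProductSpace ℝ E] {D : Set E} {p q y z : E}

theorem real_inner_sub_nonpos_of_isMinOn_norm_sub (hD : Convex ℝ D) (hz : z ∈ D)
    (hmin : IsMinOn (fun w => ‖p - w‖) D z) {w : E} (hw : w ∈ D) : ⟪p - z, w - z⟫ ≤ 0 :=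
  (norm_eq_iInf_iff_real_inner_le_zero hD hz).1 (hmin.iInf_eq hz).symm w hw

theorem norm_sub_le_norm_sub_of_real_inner_nonpos (hy : ⟪p - y, z - y⟫ ≤ 0)
    (hz : ⟪q - z, y - z⟫ ≤ 0) : ‖z - y‖ ≤ ‖q - p‖ := by
  have expand : ‖z - y‖ * ‖z - y‖ = ⟪p - y, z - y⟫ + ⟪q - z, y - z⟫ + ⟪q - p, z - y⟫ := by
    rw [← neg_sub z y, inner_neg_right, ← sub_eq_add_neg, ← inner_sub_left, ← inner_add_left,
      ← real_inner_self_eq_norm_mul_norm]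
    congr 1
    abel
  have le_mul : ‖z - y‖ * ‖z - y‖ ≤ ‖q - p‖ * ‖z - y‖ := by
    linarith [real_inner_le_norm (q - p) (z - y)]
  rcases (norm_nonneg (z - y)).eq_or_lt with h_zero | h_pos
  · exact h_zero ▸ norm_nonneg (q - p)
  · exact le_of_mul_le_mul_right le_mul h_pos

/-- The function whose minimizers over a set are the proximal points of `α`, and whose infimum is
the Moreau envelope of `f` at `α` with parameter `lam / 2`. -/
noncomputable def proximalObjective (f : E → ℝ) (lam : ℝ) (α w : E) : ℝ :=
  f w + (1 / lam) * ‖α - w‖ ^ 2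

end InnerProductSpace

section Gradient

variable {E : Type*} [NormedAddCommGroup E] [InnerProductSpace ℝ E] [CompleteSpace E]
  {D : Set E} {f : E → ℝ} {lam : ℝ} {α u v y z : E}

theorem real_inner_nonneg_of_isLocalMinOn_of_hasGradientWithinAt (hD : Convex ℝ D) (hy : y ∈ D)
    (hf : HasGradientWithinAt f v D y) (hmin : IsLocalMinOn f D y) {w : E} (hw : w ∈ D) :
    0 ≤ ⟪v, w - y⟫ :=
  hmin.hasFDerivWithinAt_nonneg hf.hasFDerivWithinAt
    (sub_mem_posTangentConeAt_of_segment_subset (hD.segment_subset hy hw))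

theorem hasGradientWithinAt_proximalObjective (hf : HasGradientWithinAt f v D y) :
    HasGradientWithinAt (proximalObjective f lam α) (v + (2 / lam) • (y - α)) D y := by
  have h_sub : HasFDerivWithinAt (fun w => α - w) (-ContinuousLinearMap.id ℝ E) D y :=
    (hasFDerivWithinAt_id y D).const_sub α
  refine (hf.hasFDerivWithinAt.add (h_sub.norm_sq.const_mul (1 / lam))).congr_fderiv ?_
  ext w
  have scale : lam⁻¹ * 2 = 2 / lam := by ring
  simp [← mul_assoc, scale]

theorem real_inner_nonpos_of_isMinOn_proximalObjective (hD : Convex ℝ D) (hlam : 0 < lam)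
    (hy : y ∈ D) (hf : HasGradientWithinAt f v D y)
    (hmin : IsMinOn (proximalObjective f lam α) D y) {w : E} (hw : w ∈ D) :
    ⟪α - (lam / 2) • v - y, w - y⟫ ≤ 0 := by
  have stationary : 0 ≤ ⟪v + (2 / lam) • (y - α), w - y⟫ :=
    real_inner_nonneg_of_isLocalMinOn_of_hasGradientWithinAt hD hy
      (hasGradientWithinAt_proximalObjective hf) hmin.localize hw
  have rescale : α - (lam / 2) • v - y = -((lam / 2) • (v + (2 / lam) • (y - α))) := by
    rw [smul_add, smul_smul, show lam / 2 * (2 / lam) = 1 by field_simp, one_smul]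
    abel
  rw [rescale, inner_neg_left, real_inner_smul_left, neg_nonpos]
  exact mul_nonneg (by positivity) stationary

theorem norm_nearest_sub_proximal_le (hD : Convex ℝ D) (hlam : 0 < lam)
    (hf : HasGradientWithinAt f v D y) (hy : y ∈ D)
    (hymin : IsMinOn (proximalObjective f lam α) D y) (hz : z ∈ D)
    (hzmin : IsMinOn (fun w => ‖α - (lam / 2) • u - w‖) D z) :
    ‖z - y‖ ≤ lam / 2 * ‖v - u‖ :=
  calc ‖z - y‖
      ≤ ‖(α - (lam / 2) • u) - (α - (lam / 2) • v)‖ :=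
        norm_sub_le_norm_sub_of_real_inner_nonpos
          (real_inner_nonpos_of_isMinOn_proximalObjective hD hlam hy hf hymin hz)
          (real_inner_sub_nonpos_of_isMinOn_norm_sub hD hz hzmin hy)
    _ = lam / 2 * ‖v - u‖ := by
        rw [sub_sub_sub_cancel_left, ← smul_sub, norm_smul_of_nonneg (by positivity)]

theorem gap_control_general {s : Set E} {f' : E → E} {K : ℝ} (hlam : 0 < lam)
    (hD : Convex ℝ D) (hDs : D ⊆ s) (hf : ∀ x ∈ s, HasGradientWithinAt f (f' x) s x)
    (hlip : ∀ x ∈ s, ∀ w ∈ s, ‖f' x - f' w‖ ≤ K * ‖x - w‖) (hα : α ∈ s) (hy : y ∈ D)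
    (hymin : IsMinOn (proximalObjective f lam α) D y) (hz : z ∈ D)
    (hzmin : IsMinOn (fun w => ‖α - (lam / 2) • f' α - w‖) D z) :
    ‖z - α‖ ≤ (1 + lam / 2 * K) * ‖y - α‖ := by
  have hfy : HasGradientWithinAt f (f' y) D y := (hf y (hDs hy)).hasFDerivWithinAt.mono hDs
  calc ‖z - α‖
      ≤ ‖z - y‖ + ‖y - α‖ := norm_sub_le_norm_sub_add_norm_sub z y α
    _ ≤ lam / 2 * ‖f' y - f' α‖ + ‖y - α‖ := by
        gcongr
        exact norm_nearest_sub_proximal_le hD hlam hfy hy hymin hz hzmin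
    _ ≤ lam / 2 * (K * ‖y - α‖) + ‖y - α‖ := by
        gcongr
        exact hlip y (hDs hy) α hα
    _ = (1 + lam / 2 * K) * ‖y - α‖ := by ring

end Gradient

theorem gap_control
    (d : ℕ) (lam : ℝ) (hlam : 0 < lam)
    (D : Set (EuclideanSpace ℝ (Fin d)))
    (hne : D.Nonempty) (hclosed : IsClosed D) (hconv : Convex ℝ D)
    (f : EuclideanSpace ℝ (Fin d) → ℝ)
    (hdiff : Differentiable ℝ f)
    (hlip : ∀ x y, ‖gradient f x - gradient f y‖ ≤ (1 / lam) * ‖x - y‖)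
    (α : EuclideanSpace ℝ (Fin d)) (hα : α ∈ D)
    (y : EuclideanSpace ℝ (Fin d)) (hy : y ∈ D)
    (hymin : ∀ w ∈ D, f y + (1 / lam) * ‖α - y‖ ^ 2 ≤ f w + (1 / lam) * ‖α - w‖ ^ 2)
    (z : EuclideanSpace ℝ (Fin d)) (hz : z ∈ D)
    (hzmin : ∀ w ∈ D,
      ‖α - (lam / 2) • gradient f α - z‖ ≤ ‖α - (lam / 2) • gradient f α - w‖) :
    ‖z - α‖ ≤ (3 / 2) * ‖y - α‖ := by
  have bound : ‖z - α‖ ≤ (1 + lam / 2 * (1 / lam)) * ‖y - α‖ :=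
    gap_control_general hlam hconv (Set.subset_univ D)
      (fun x _ => (hdiff x).hasGradientAt.hasFDerivAt.hasFDerivWithinAt)
      (fun x _ w _ => hlip x w) (Set.mem_univ α) hy hymin hz hzmin
  rwa [show 1 + lam / 2 * (1 / lam) = 3 / 2 by field_simp; norm_num] at bound
end

section
/- Stationarity controls unilateral improvement: let λ > 0, let D ⊆ ℝ^d be nonempty, closed and convex, let f : ℝ^d → ℝ be differentiable, let α ∈ D, and let α⁺ be the nearest point of D to α − (λ/2)∇f(α). Then for every u ∈ D, ⟨∇f(α), α − u⟩ ≤ ((2/λ)·‖α⁺ − u‖₂ + ‖∇f(α)‖₂) · ‖α − α⁺‖₂. -/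
/-!
STATEMENT 16 (Stationarity controls unilateral improvement): let `λ > 0`, `D ⊆ ℝ^d`
nonempty, closed and convex, `f : ℝ^d → ℝ` differentiable, `α ∈ D`, and `α⁺` the
nearest point of `D` to `α − (λ/2)∇f(α)`. Then for every `u ∈ D`,
`⟨∇f(α), α − u⟩ ≤ ((2/λ)·‖α⁺ − u‖₂ + ‖∇f(α)‖₂) · ‖α − α⁺‖₂`.
-/

open RealInnerProductSpace

section NearestPoint

variable {E : Type*} [NormedAddCommGroup E] [InnerProductSpace ℝ E] {D : Set E} {p u : E}

theorem real_inner_sub_sub_nonpos_of_isMinOn_norm_sub {w : E} (hD : Convex ℝ D) (hp : p ∈ D)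
    (hmin : IsMinOn (fun v ↦ ‖w - v‖) D p) (hu : u ∈ D) : ⟪w - p, u - p⟫ ≤ 0 :=
  (norm_eq_iInf_iff_real_inner_le_zero hD hp).1 (hmin.iInf_eq hp).symm u hu

theorem mul_real_inner_le_of_isMinOn_norm_step_sub {x g : E} {t : ℝ} (hD : Convex ℝ D)
    (hp : p ∈ D) (hmin : IsMinOn (fun v ↦ ‖x - t • g - v‖) D p) (hu : u ∈ D) :
    t * ⟪g, p - u⟫ ≤ ⟪x - p, p - u⟫ := by
  have hvar : ⟪x - t • g - p, u - p⟫ ≤ 0 :=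
    real_inner_sub_sub_nonpos_of_isMinOn_norm_sub hD hp hmin hu
  rw [sub_right_comm, ← neg_sub p u, inner_neg_right, inner_sub_left,
    real_inner_smul_left] at hvar
  linarith

theorem stationarity_controls_improvement_general {x g : E} {t : ℝ} (ht : 0 < t)
    (hD : Convex ℝ D) (hp : p ∈ D) (hmin : IsMinOn (fun v ↦ ‖x - t • g - v‖) D p)
    (hu : u ∈ D) : ⟪g, x - u⟫ ≤ (t⁻¹ * ‖p - u‖ + ‖g‖) * ‖x - p‖ := by
  have hfeasible : ⟪g, p - u⟫ ≤ t⁻¹ * (‖x - p‖ * ‖p - u‖) := by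
    rw [le_inv_mul_iff₀ ht]
    exact (mul_real_inner_le_of_isMinOn_norm_step_sub hD hp hmin hu).trans
      (real_inner_le_norm _ _)
  calc
    ⟪g, x - u⟫ = ⟪g, p - u⟫ + ⟪g, x - p⟫ := by
      rw [← inner_add_right, add_comm, sub_add_sub_cancel]
    _ ≤ t⁻¹ * (‖x - p‖ * ‖p - u‖) + ‖g‖ * ‖x - p‖ :=
      add_le_add hfeasible (real_inner_le_norm _ _)
    _ = (t⁻¹ * ‖p - u‖ + ‖g‖) * ‖x - p‖ := by ring

end NearestPoint

theorem stationarity_controls_improvement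
    (d : ℕ) (lam : ℝ) (hlam : 0 < lam)
    (D : Set (EuclideanSpace ℝ (Fin d)))
    (hne : D.Nonempty) (hclosed : IsClosed D) (hconv : Convex ℝ D)
    (f : EuclideanSpace ℝ (Fin d) → ℝ)
    (hdiff : Differentiable ℝ f)
    (α : EuclideanSpace ℝ (Fin d)) (hα : α ∈ D)
    (αplus : EuclideanSpace ℝ (Fin d)) (hαplus : αplus ∈ D)
    (hproj : ∀ w ∈ D,
      ‖α - (lam / 2) • gradient f α - αplus‖ ≤ ‖α - (lam / 2) • gradient f α - w‖) :
    ∀ u ∈ D,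
      ⟪gradient f α, α - u⟫
        ≤ ((2 / lam) * ‖αplus - u‖ + ‖gradient f α‖) * ‖α - αplus‖ := by
  intro u hu
  simpa only [inv_div] using stationarity_controls_improvement_general (half_pos hlam) hconv
    hαplus (isMinOn_iff.2 hproj) hu
end
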